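/- For every positive integer n, the number of pairs (x, y) ∈ ℤ² with x² + 2y² = n, x ≡ 1 (mod 2), and y ≡ 0 (mod 2) equals ∑_{d|n} χ₋₈(d) − ∑_{d|(n/2)} χ₋₈(d) + ∑_{d|n} χ₋₄(n/d) χ₈(d). -/

import Mathlib

open Finset

/-- The Kronecker symbol `(-8/d)` for positive `d`. -/
def chiM8 (d : ℕ) : ℤ :=
  if d % 8 = 1 ∨ d % 8 = 3 then 1 else if d % 8 = 5 ∨ d % 8 = 7 then -1 else 0

/-- The Kronecker symbol `(8/d)` for positive `d`. -/
def chi8 (d : ℕ) : ℤ :=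
  if d % 8 = 1 ∨ d % 8 = 7 then 1 else if d % 8 = 3 ∨ d % 8 = 5 then -1 else 0

/-- The Kronecker symbol `(-4/d)` for positive `d`. -/
def chiM4 (d : ℕ) : ℤ := if d % 4 = 1 then 1 else if d % 4 = 3 then -1 else 0

/-- `Sdiv χ n k = ∑_{d ∣ n/k} χ d`, interpreted as `0` when `k` does not divide `n`. -/
def Sdiv (χ : ℕ → ℤ) (n k : ℕ) : ℤ := if k ∣ n then ∑ d ∈ (n / k).divisors, χ d else 0

/-!
Let `r n` be the number of elements of norm `n` in `ℤ√(-2)`, that is, of solutions of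
`x² + 2y² = n`. If a prime `p` is inert, every element of norm `p k` is divisible by `p`; otherwise
`p` is the norm of some `π` (Thue's lemma) and every element of norm `p k` is divisible by `π` or by
`star π`, by both exactly when `p` divides it (if `p ≠ 2`) or always (if `p = 2`). Counting gives
`r (p k) = (1 + χ₋₈ p) r k - χ₋₈ p * r (k / p)`, the recursion that the divisor sums of the
completely multiplicative `χ₋₈` satisfy as well, so `r n = 2 ∑_{d ∣ n} χ₋₈ d`.

In a solution, `x` is odd and `y` is even exactly when `n ≡ 1 mod 4`. This matches the right-hand
side: `χ₋₄ (n / d) χ₈ d = χ₋₄ n χ₋₈ d`, so its last sum is `χ₋₄ n ∑_{d ∣ n} χ₋₈ d`, while the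
first two cancel for even `n`.
-/

/-! ### Divisor sums -/

section DivisorSums

variable {χ : ℕ → ℤ} {p k n : ℕ}

lemma Sdiv_one (χ : ℕ → ℤ) (n : ℕ) : Sdiv χ n 1 = ∑ d ∈ n.divisors, χ d := by
  simp [Sdiv]

lemma Sdiv_mul_left (χ : ℕ → ℤ) (n : ℕ) (hk : 0 < k) : Sdiv χ (k * n) k = Sdiv χ n 1 := by
  simp [Sdiv, hk]

lemma Sdiv_of_not_dvd (χ : ℕ → ℤ) (h : ¬ k ∣ n) : Sdiv χ n k = 0 :=
  if_neg h

lemma sum_divisors_filter_dvd (hχ : ∀ a, χ (k * a) = χ k * χ a) (hk : 0 < k) :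
    ∑ d ∈ n.divisors with k ∣ d, χ d = χ k * Sdiv χ n k := by
  by_cases hkn : k ∣ n
  · obtain ⟨m, rfl⟩ := hkn
    have hfilter : {d ∈ (k * m).divisors | k ∣ d} = m.divisors.image (k * ·) := by
      ext d
      simp only [mem_filter, mem_image, Nat.mem_divisors]
      constructor
      · rintro ⟨⟨h, h0⟩, e, rfl⟩
        exact ⟨e, ⟨Nat.dvd_of_mul_dvd_mul_left hk h, right_ne_zero_of_mul h0⟩, rfl⟩
      · rintro ⟨e, ⟨h, h0⟩, rfl⟩
        exact ⟨⟨Nat.mul_dvd_mul_left k h, mul_ne_zero hk.ne' h0⟩, dvd_mul_right k e⟩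
    rw [hfilter, sum_image (mul_right_injective₀ hk.ne').injOn, Sdiv_mul_left χ m hk, Sdiv_one,
      mul_sum]
    exact sum_congr rfl fun d _ => hχ d
  · rw [Sdiv_of_not_dvd χ hkn, mul_zero, filter_false_of_mem, sum_empty]
    exact fun d hd hkd => hkn (hkd.trans (Nat.dvd_of_mem_divisors hd))

lemma divisors_prime_mul_filter_not_dvd (hp : p.Prime) (n : ℕ) :
    {d ∈ (p * n).divisors | ¬ p ∣ d} = {d ∈ n.divisors | ¬ p ∣ d} := by
  ext d
  simp only [mem_filter, Nat.mem_divisors, and_congr_left_iff]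
  intro hpd
  rw [(hp.coprime_iff_not_dvd.2 hpd).symm.dvd_mul_left, mul_ne_zero_iff,
    and_iff_right hp.ne_zero]

lemma Sdiv_prime_mul (hχ : ∀ a, χ (p * a) = χ p * χ a) (hp : p.Prime) (n : ℕ) :
    Sdiv χ (p * n) 1 = (1 + χ p) * Sdiv χ n 1 - χ p * Sdiv χ n p := by
  have hpn := sum_filter_add_sum_filter_not (p * n).divisors (p ∣ ·) χ
  have hn := sum_filter_add_sum_filter_not n.divisors (p ∣ ·) χ
  rw [sum_divisors_filter_dvd hχ hp.pos, ← Sdiv_one] at hpn hn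
  rw [divisors_prime_mul_filter_not_dvd hp, Sdiv_mul_left χ n hp.pos] at hpn
  linear_combination hn - hpn

end DivisorSums

/-! ### The three characters -/

lemma chiM8_eq_χ₈' (n : ℕ) : chiM8 n = ZMod.χ₈' n := by
  rw [ZMod.χ₈'_nat_eq_if_mod_eight]
  unfold chiM8
  split_ifs <;> omega

lemma chiM4_eq_χ₄ (n : ℕ) : chiM4 n = ZMod.χ₄ n := by
  rw [ZMod.χ₄_nat_eq_if_mod_four]
  unfold chiM4
  split_ifs <;> omega

lemma chiM8_mul (a b : ℕ) : chiM8 (a * b) = chiM8 a * chiM8 b := by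
  simp only [chiM8_eq_χ₈', Nat.cast_mul, map_mul]

lemma chiM4_mul (a b : ℕ) : chiM4 (a * b) = chiM4 a * chiM4 b := by
  simp only [chiM4_eq_χ₄, Nat.cast_mul, map_mul]

lemma chi8_eq_chiM4_mul_chiM8 (n : ℕ) : chi8 n = chiM4 n * chiM8 n := by
  unfold chi8 chiM4 chiM8
  split_ifs <;> omega

lemma sum_chiM4_mul_chi8 (n : ℕ) :
    ∑ d ∈ n.divisors, chiM4 (n / d) * chi8 d = chiM4 n * Sdiv chiM8 n 1 := by
  rw [Sdiv_one, mul_sum]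
  refine sum_congr rfl fun d hd => ?_
  rw [chi8_eq_chiM4_mul_chiM8, ← mul_assoc, ← chiM4_mul,
    Nat.div_mul_cancel (Nat.dvd_of_mem_divisors hd)]

lemma chiM8_eq_legendreSym (p : ℕ) [Fact p.Prime] : chiM8 p = legendreSym p (-2) := by
  by_cases hp : p = 2
  · subst hp
    exact ((legendreSym.eq_zero_iff 2 (-2)).2 rfl).symm
  · rw [legendreSym.at_neg_two hp, chiM8_eq_χ₈']

lemma Sdiv_chiM8_two_mul (n : ℕ) : Sdiv chiM8 (2 * n) 1 = Sdiv chiM8 (2 * n) 2 := by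
  have hchi : chiM8 2 = 0 := rfl
  rw [Sdiv_prime_mul (chiM8_mul 2) Nat.prime_two, Sdiv_mul_left chiM8 n two_pos, hchi]
  ring

/-! ### Elements of given norm in `ℤ√d` -/

/-- The elements of norm `n` in `ℤ√d`. As `(x + y√d).norm = x² - d y²`, they encode the
representations of `n` by the binary form `x² - d y²`. -/
def elementsOfNorm (d n : ℤ) : Set (ℤ√d) := {z | z.norm = n}

section ElementsOfNorm

variable {d q : ℤ} {α π z : ℤ√d}

lemma elementsOfNorm_finite (hd : d < 0) (n : ℤ) : (elementsOfNorm d n).Finite := by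
  refine ((Set.finite_Icc (-n) n).image2 Zsqrtd.mk (Set.finite_Icc (-n) n)).subset ?_
  rintro ⟨x, y⟩ (h : x * x - d * y * y = n)
  have hx : x ^ 2 ≤ n := by nlinarith [sq_nonneg y]
  have hy : y ^ 2 ≤ n := by nlinarith [sq_nonneg x, sq_nonneg y]
  exact ⟨x, ⟨by nlinarith, by nlinarith⟩, y, ⟨by nlinarith, by nlinarith⟩, rfl⟩

lemma elementsOfNorm_one (hd : d < -1) : elementsOfNorm d 1 = {1, -1} := by
  ext ⟨x, y⟩
  simp only [elementsOfNorm, Set.mem_ofPred_eq, Zsqrtd.norm_def, Set.mem_insert_iff,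
    Set.mem_singleton_iff, Zsqrtd.ext_iff, Zsqrtd.re_one, Zsqrtd.im_one, Zsqrtd.re_neg,
    Zsqrtd.im_neg]
  constructor
  · intro h
    have hy : y = 0 := by
      by_contra hy
      have : 0 < y ^ 2 := by positivity
      nlinarith [sq_nonneg x]
    subst hy
    have hx : x ^ 2 = 1 := by linarith
    simpa using sq_eq_one_iff.1 hx
  · rintro (⟨rfl, rfl⟩ | ⟨rfl, rfl⟩) <;> norm_num

lemma isLeftRegular_of_norm_ne_zero (hα : α.norm ≠ 0) : IsLeftRegular α := by
  intro z w (h : α * z = α * w)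
  refine Zsqrtd.eq_of_smul_eq_smul_left hα ?_
  rw [Zsqrtd.norm_eq_mul_conj]
  linear_combination star α * h

lemma dvd_iff_norm_dvd_star_mul (hα : α.norm ≠ 0) : α ∣ z ↔ (α.norm : ℤ√d) ∣ star α * z := by
  have hstar : IsLeftRegular (star α) :=
    isLeftRegular_of_norm_ne_zero (by rwa [Zsqrtd.norm_conj])
  rw [Zsqrtd.norm_eq_mul_conj, mul_comm α, hstar.dvd_cancel_left]

lemma ncard_elementsOfNorm_sep_dvd (hα : α.norm ≠ 0) (n : ℤ) :
    {z ∈ elementsOfNorm d (α.norm * n) | α ∣ z}.ncard = (elementsOfNorm d n).ncard := by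
  have himage : {z ∈ elementsOfNorm d (α.norm * n) | α ∣ z} = (α * ·) '' elementsOfNorm d n := by
    ext z
    constructor
    · rintro ⟨hz, w, rfl⟩
      exact ⟨w, mul_left_cancel₀ hα ((Zsqrtd.norm_mul α w).symm.trans hz), rfl⟩
    · rintro ⟨w, rfl, rfl⟩
      exact ⟨Zsqrtd.norm_mul α w, dvd_mul_right α w⟩
  rw [himage, Set.ncard_image_of_injective _ (isLeftRegular_of_norm_ne_zero hα)]

lemma ncard_elementsOfNorm_sep_intCast_dvd (hq : q ≠ 0) (n : ℤ) :
    {z ∈ elementsOfNorm d (q * n) | (q : ℤ√d) ∣ z}.ncard =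
      if q ∣ n then (elementsOfNorm d (n / q)).ncard else 0 := by
  split_ifs with hqn
  · obtain ⟨m, rfl⟩ := hqn
    rw [Int.mul_ediv_cancel_left m hq, ← mul_assoc, ← Zsqrtd.norm_intCast (d := d),
      ncard_elementsOfNorm_sep_dvd (by simpa using hq)]
  · convert Set.ncard_empty (ℤ√d)
    refine Set.eq_empty_of_forall_notMem ?_
    rintro _ ⟨hz, w, rfl⟩
    refine hqn ⟨w.norm, mul_left_cancel₀ hq ?_⟩
    rw [← mul_assoc, ← Zsqrtd.norm_intCast (d := d), ← Zsqrtd.norm_mul]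
    exact hz.symm

lemma intCast_dvd_of_dvd_norm_of_dvd_im (hq : Prime q) (hnorm : q ∣ z.norm) (him : q ∣ z.im) :
    (q : ℤ√d) ∣ z := by
  refine (Zsqrtd.intCast_dvd q z).2 ⟨hq.dvd_of_dvd_pow (n := 2) ?_, him⟩
  have hre : z.re ^ 2 = z.norm + d * z.im * z.im := by rw [Zsqrtd.norm_def]; ring
  exact hre ▸ dvd_add hnorm (him.mul_left _)

lemma dvd_or_star_dvd_of_prime_norm (hπ : Prime π.norm) (hz : π.norm ∣ z.norm) :
    π ∣ z ∨ star π ∣ z := by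
  have hstar : (star π).norm ≠ 0 := by simpa using hπ.ne_zero
  rw [dvd_iff_norm_dvd_star_mul hπ.ne_zero, dvd_iff_norm_dvd_star_mul hstar, star_star,
    Zsqrtd.norm_conj]
  have him : π.norm ∣ (star π * z).im * (π * z).im := by
    have : (star π * z).im * (π * z).im = π.norm * z.im ^ 2 - π.im ^ 2 * z.norm := by
      simp only [Zsqrtd.im_mul, Zsqrtd.re_star, Zsqrtd.im_star, Zsqrtd.norm_def]
      ring
    exact this ▸ dvd_sub (dvd_mul_right _ _) (hz.mul_left _)
  refine (hπ.dvd_or_dvd him).imp (intCast_dvd_of_dvd_norm_of_dvd_im hπ ?_)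
    (intCast_dvd_of_dvd_norm_of_dvd_im hπ ?_) <;> simp [Zsqrtd.norm_mul]

lemma not_norm_dvd_two_mul_re (hπ : Prime π.norm) (h : ¬ π.norm ∣ 2 * d) :
    ¬ π.norm ∣ 2 * π.re := by
  intro hdvd
  have hre : π.norm ∣ π.re :=
    (hπ.dvd_or_dvd hdvd).resolve_left fun h2 => h (h2.mul_right d)
  have him : π.norm ∣ π.im := by
    have : π.norm ∣ d * π.im ^ 2 := by
      have hd : d * π.im ^ 2 = π.re * π.re - π.norm := by rw [Zsqrtd.norm_def]; ring
      exact hd ▸ dvd_sub (hre.mul_right _) dvd_rfl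
    exact hπ.dvd_of_dvd_pow ((hπ.dvd_or_dvd this).resolve_left fun hd => h (hd.mul_left 2))
  have hsq : π.norm * π.norm ∣ π.re * π.re - d * (π.im * π.im) :=
    dvd_sub (mul_dvd_mul hre hre) ((mul_dvd_mul him him).mul_left d)
  have hnorm : π.re * π.re - d * (π.im * π.im) = π.norm * 1 := by rw [Zsqrtd.norm_def]; ring
  rw [hnorm] at hsq
  exact hπ.not_dvd_one ((mul_dvd_mul_iff_left hπ.ne_zero).1 hsq)

lemma dvd_and_star_dvd_iff_norm_dvd (hπ : Prime π.norm) (h : ¬ π.norm ∣ 2 * d) :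
    π ∣ z ∧ star π ∣ z ↔ (π.norm : ℤ√d) ∣ z := by
  refine ⟨fun ⟨h₁, h₂⟩ => ?_, fun hz => ?_⟩
  · have hstar : (star π).norm ≠ 0 := by simpa using hπ.ne_zero
    rw [dvd_iff_norm_dvd_star_mul hπ.ne_zero] at h₁
    rw [dvd_iff_norm_dvd_star_mul hstar, star_star, Zsqrtd.norm_conj] at h₂
    have htrace : star π * z + π * z = ((2 * π.re : ℤ) : ℤ√d) * z := by
      ext <;> simp only [Zsqrtd.re_add, Zsqrtd.im_add, Zsqrtd.re_mul, Zsqrtd.im_mul,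
        Zsqrtd.re_star, Zsqrtd.im_star, Zsqrtd.re_intCast, Zsqrtd.im_intCast] <;> ring
    have hdvd := htrace ▸ dvd_add h₁ h₂
    rw [Zsqrtd.intCast_dvd, Zsqrtd.re_smul, Zsqrtd.im_smul] at hdvd
    have hcancel {a : ℤ} (ha : π.norm ∣ 2 * π.re * a) : π.norm ∣ a :=
      (hπ.dvd_or_dvd ha).resolve_left (not_norm_dvd_two_mul_re hπ h)
    exact (Zsqrtd.intCast_dvd _ _).2 ⟨hcancel hdvd.1, hcancel hdvd.2⟩
  · rw [Zsqrtd.norm_eq_mul_conj] at hz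
    exact ⟨dvd_of_mul_right_dvd hz, dvd_of_mul_left_dvd hz⟩

lemma dvd_star_of_norm_dvd (hπ : Prime π.norm) (h : π.norm ∣ d) : π ∣ star π := by
  have hre : π.norm ∣ π.re := by
    refine hπ.dvd_of_dvd_pow (n := 2) ?_
    have : π.re ^ 2 = π.norm + d * π.im * π.im := by rw [Zsqrtd.norm_def]; ring
    exact this ▸ dvd_add dvd_rfl ((h.mul_right _).mul_right _)
  have hdvd : π ∣ (π.re : ℤ√d) :=
    (Dvd.intro _ (Zsqrtd.norm_eq_mul_conj π).symm).trans
      ((Zsqrtd.intCast_dvd_intCast _ _).2 hre)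
  have hstar : star π = 2 * (π.re : ℤ√d) - π := by
    ext <;> simp [two_mul]
  exact hstar ▸ dvd_sub (hdvd.mul_left 2) dvd_rfl

lemma ncard_elementsOfNorm_of_split (hd : d < 0) (hπ : Prime π.norm) (h : ¬ π.norm ∣ 2 * d)
    (n : ℤ) :
    (elementsOfNorm d (π.norm * n)).ncard +
        {z ∈ elementsOfNorm d (π.norm * n) | (π.norm : ℤ√d) ∣ z}.ncard =
      2 * (elementsOfNorm d n).ncard := by
  set E := elementsOfNorm d (π.norm * n) with hE
  have hfin : E.Finite := elementsOfNorm_finite hd _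
  have hunion : {z ∈ E | π ∣ z} ∪ {z ∈ E | star π ∣ z} = E := by
    rw [← Set.sep_or, Set.sep_eq_self_iff_mem_true]
    exact fun z hz => dvd_or_star_dvd_of_prime_norm hπ ⟨n, hz⟩
  have hinter : {z ∈ E | π ∣ z} ∩ {z ∈ E | star π ∣ z} = {z ∈ E | (π.norm : ℤ√d) ∣ z} := by
    simp only [← Set.sep_and, dvd_and_star_dvd_iff_norm_dvd hπ h]
  have hstar : {z ∈ E | star π ∣ z}.ncard = (elementsOfNorm d n).ncard := by
    rw [hE, ← Zsqrtd.norm_conj π]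
    exact ncard_elementsOfNorm_sep_dvd (by simpa using hπ.ne_zero) n
  have hcard := Set.ncard_union_add_ncard_inter {z ∈ E | π ∣ z} {z ∈ E | star π ∣ z}
    (hfin.subset (Set.sep_subset _ _)) (hfin.subset (Set.sep_subset _ _))
  rwa [hunion, hinter, hstar, ncard_elementsOfNorm_sep_dvd hπ.ne_zero, ← two_mul] at hcard

lemma ncard_elementsOfNorm_of_ramified (hπ : Prime π.norm) (h : π.norm ∣ d) (n : ℤ) :
    (elementsOfNorm d (π.norm * n)).ncard = (elementsOfNorm d n).ncard := by
  have hall : {z ∈ elementsOfNorm d (π.norm * n) | π ∣ z} = elementsOfNorm d (π.norm * n) := by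
    rw [Set.sep_eq_self_iff_mem_true]
    exact fun z hz => (dvd_or_star_dvd_of_prime_norm hπ ⟨n, hz⟩).elim id
      (dvd_star_of_norm_dvd hπ h).trans
  rw [← hall, ncard_elementsOfNorm_sep_dvd hπ.ne_zero]

lemma elementsOfNorm_sep_dvd_of_inert {p : ℕ} [Fact p.Prime] (h : legendreSym p d = -1) (n : ℤ) :
    {z ∈ elementsOfNorm d (p * n) | ((p : ℤ) : ℤ√d) ∣ z} = elementsOfNorm d (p * n) := by
  rw [Set.sep_eq_self_iff_mem_true]
  refine fun z hz => (Zsqrtd.intCast_dvd _ _).2 (legendreSym.prime_dvd_of_eq_neg_one h ⟨n, ?_⟩)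
  rw [← show z.norm = p * n from hz, Zsqrtd.norm_def]
  ring

end ElementsOfNorm

/-! ### The ring `ℤ√(-2)` -/

/-- Thue's lemma. The pairs `(i, j)` with `0 ≤ i, j ≤ ⌊√n⌋` outnumber `ZMod n`, so two of them have
the same value of `i - c j`; subtract them. -/
lemma exists_sq_lt_and_intCast_eq_mul {n : ℕ} (hn : ¬ IsSquare n) (c : ZMod n) :
    ∃ x y : ℤ, (x ≠ 0 ∨ y ≠ 0) ∧ x ^ 2 < n ∧ y ^ 2 < n ∧ (x : ZMod n) = c * y := by
  have : NeZero n := ⟨fun h => hn (h ▸ IsSquare.zero)⟩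
  set k := n.sqrt
  have hcard : Fintype.card (ZMod n) < Fintype.card (Fin (k + 1) × Fin (k + 1)) := by
    simpa using Nat.lt_succ_sqrt n
  obtain ⟨⟨i, j⟩, ⟨i', j'⟩, hne, heq⟩ := Fintype.exists_ne_map_eq_of_card_lt
    (fun s : Fin (k + 1) × Fin (k + 1) => ((s.1 : ℕ) : ZMod n) - c * ((s.2 : ℕ) : ZMod n)) hcard
  have hk : (k : ℤ) ^ 2 < n := by
    have hle : k * k ≤ n := Nat.sqrt_le n
    have hlt : k * k < n := hle.lt_of_ne fun h => hn ⟨k, h.symm⟩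
    exact_mod_cast (sq k).trans_lt hlt
  have hsub (a b : Fin (k + 1)) : ((a : ℤ) - b) ^ 2 < n := by
    refine (sq_le_sq.2 ?_).trans_lt hk
    rw [abs_le, Nat.abs_cast]
    omega
  refine ⟨i - i', j - j', ?_, hsub i i', hsub j j', ?_⟩
  · simpa [sub_ne_zero, Fin.val_inj, Prod.ext_iff, ← not_and_or] using hne
  · push_cast
    linear_combination heq

lemma exists_norm_eq_of_isSquare_neg_two {p : ℕ} [hp : Fact p.Prime]
    (h : IsSquare ((-2 : ℤ) : ZMod p)) : ∃ π : ℤ√(-2), π.norm = p := by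
  obtain ⟨c, hc⟩ := h
  obtain ⟨x, y, hne, hx, hy, hxy⟩ := exists_sq_lt_and_intCast_eq_mul hp.out.prime.not_isSquare c
  have hdvd : (p : ℤ) ∣ x ^ 2 + 2 * y ^ 2 := by
    rw [← ZMod.intCast_zmod_eq_zero_iff_dvd]
    push_cast at hc ⊢
    rw [hxy]
    linear_combination (-(y : ZMod p) ^ 2) * hc
  have hpos : 0 < x ^ 2 + 2 * y ^ 2 := by
    rcases hne with h | h <;> positivity
  obtain ⟨m, hm⟩ := hdvd
  have hm0 : 0 < m := by nlinarith
  have hm3 : m < 3 := by nlinarith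
  obtain rfl | rfl : m = 1 ∨ m = 2 := by omega
  · exact ⟨⟨x, y⟩, by rw [Zsqrtd.norm_def]; linarith⟩
  · -- Now `x + y√(-2)` has norm `2p`; dividing it by `√(-2)` leaves an element of norm `p`.
    obtain ⟨w, rfl⟩ : (2 : ℤ) ∣ x :=
      Int.prime_two.dvd_of_dvd_pow (n := 2) ⟨p - y ^ 2, by linarith⟩
    exact ⟨⟨y, w⟩, by rw [Zsqrtd.norm_def]; linarith⟩

lemma ncard_elementsOfNorm_neg_two_prime_mul (p : ℕ) [hp : Fact p.Prime] (n : ℤ) :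
    ((elementsOfNorm (-2) (p * n)).ncard : ℤ) =
      (1 + chiM8 p) * (elementsOfNorm (-2) n).ncard -
        chiM8 p * {z ∈ elementsOfNorm (-2) (p * n) | ((p : ℤ) : ℤ√(-2)) ∣ z}.ncard := by
  have hprime : Prime (p : ℤ) := Nat.prime_iff_prime_int.1 hp.out
  rw [chiM8_eq_legendreSym]
  by_cases hinert : legendreSym p (-2) = -1
  · rw [elementsOfNorm_sep_dvd_of_inert hinert, hinert]
    ring
  have hsq : IsSquare ((-2 : ℤ) : ZMod p) := not_not.1 (mt (legendreSym.eq_neg_one_iff p).2 hinert)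
  obtain ⟨π, hπ⟩ := exists_norm_eq_of_isSquare_neg_two hsq
  rw [← hπ] at hprime ⊢
  by_cases hram : ((-2 : ℤ) : ZMod p) = 0
  · have hdvd : π.norm ∣ -2 := hπ ▸ (ZMod.intCast_zmod_eq_zero_iff_dvd _ p).1 hram
    rw [ncard_elementsOfNorm_of_ramified hprime hdvd, (legendreSym.eq_zero_iff p _).2 hram]
    ring
  · have hndvd : ¬ π.norm ∣ 2 * -2 := by
      rw [hπ] at hprime ⊢
      rw [ZMod.intCast_zmod_eq_zero_iff_dvd] at hram
      exact fun h => (hprime.dvd_or_dvd h).elim (hram ∘ (dvd_neg.2 ·)) hram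
    rw [(legendreSym.eq_one_iff p hram).2 hsq]
    have hcard := ncard_elementsOfNorm_of_split (by norm_num) hprime hndvd n
    zify at hcard
    linear_combination hcard

theorem ncard_elementsOfNorm_neg_two {n : ℕ} (hn : n ≠ 0) :
    ((elementsOfNorm (-2) n).ncard : ℤ) = 2 * Sdiv chiM8 n 1 := by
  induction n using Nat.strong_induction_on with
  | _ n ih =>
  by_cases h1 : n = 1
  · subst h1
    rw [Nat.cast_one, elementsOfNorm_one (by norm_num), Set.ncard_pair (by decide)]
    rfl
  obtain ⟨p, hp, k, rfl⟩ := Nat.exists_prime_and_dvd h1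
  have : Fact p.Prime := ⟨hp⟩
  have hk : k ≠ 0 := right_ne_zero_of_mul hn
  have hlt : k < p * k := lt_mul_of_one_lt_left hk.bot_lt hp.one_lt
  have hdiv : (({z ∈ elementsOfNorm (-2) (p * k) | ((p : ℤ) : ℤ√(-2)) ∣ z}.ncard : ℕ) : ℤ) =
      2 * Sdiv chiM8 k p := by
    rw [ncard_elementsOfNorm_sep_intCast_dvd (by exact_mod_cast hp.ne_zero)]
    by_cases hpk : p ∣ k
    · obtain ⟨m, rfl⟩ := hpk
      have hm : m ≠ 0 := right_ne_zero_of_mul hk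
      have hmlt : m < p * m := lt_mul_of_one_lt_left hm.bot_lt hp.one_lt
      rw [if_pos (by simp), Nat.cast_mul,
        Int.mul_ediv_cancel_left _ (by exact_mod_cast hp.ne_zero), ih m (hmlt.trans hlt) hm,
        Sdiv_mul_left chiM8 m hp.pos]
    · rw [if_neg (by exact_mod_cast hpk), Sdiv_of_not_dvd chiM8 hpk]
      rfl
  rw [Nat.cast_mul, ncard_elementsOfNorm_neg_two_prime_mul, ih k hlt hk, hdiv,
    Sdiv_prime_mul (chiM8_mul p) hp]
  ring

/-! ### Representations by `x² + 2y²` -/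

lemma odd_and_even_iff_of_sq_add_two_mul_sq {x y n : ℤ} (h : x ^ 2 + 2 * y ^ 2 = n) :
    x % 2 = 1 ∧ y % 2 = 0 ↔ n % 4 = 1 := by
  subst h
  obtain ⟨u, rfl | rfl⟩ := Int.even_or_odd' x <;> obtain ⟨v, rfl | rfl⟩ := Int.even_or_odd' y <;>
    ring_nf <;> omega

lemma ncard_sq_add_two_mul_sq (n : ℤ) :
    {p : ℤ × ℤ | p.1 ^ 2 + 2 * p.2 ^ 2 = n}.ncard = (elementsOfNorm (-2) n).ncard := by
  refine Set.ncard_congr (fun p _ => ⟨p.1, p.2⟩) ?_ ?_ ?_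
  · intro p (hp : p.1 ^ 2 + 2 * p.2 ^ 2 = n)
    change Zsqrtd.norm _ = n
    rw [Zsqrtd.norm_def]
    linarith
  · rintro ⟨x, y⟩ ⟨x', y'⟩ - - h
    simpa [Zsqrtd.ext_iff] using h
  · intro z (hz : z.norm = n)
    refine ⟨(z.re, z.im), ?_, rfl⟩
    change z.re ^ 2 + 2 * z.im ^ 2 = n
    rw [← hz, Zsqrtd.norm_def]
    ring

lemma ncard_sq_add_two_mul_sq_odd_even (n : ℤ) :
    {p : ℤ × ℤ | p.1 ^ 2 + 2 * p.2 ^ 2 = n ∧ p.1 % 2 = 1 ∧ p.2 % 2 = 0}.ncard =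
      if n % 4 = 1 then (elementsOfNorm (-2) n).ncard else 0 := by
  have hset : {p : ℤ × ℤ | p.1 ^ 2 + 2 * p.2 ^ 2 = n ∧ p.1 % 2 = 1 ∧ p.2 % 2 = 0} =
      {p : ℤ × ℤ | p.1 ^ 2 + 2 * p.2 ^ 2 = n ∧ n % 4 = 1} :=
    Set.ext fun _ => and_congr_right odd_and_even_iff_of_sq_add_two_mul_sq
  rw [hset]
  split_ifs with h <;> simp [h, ncard_sq_add_two_mul_sq]

theorem rep_x2_2y2_x1mod2_y0mod2 (n : ℕ) (hn : 0 < n) :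
    ({p : ℤ × ℤ | p.1 ^ 2 + 2 * p.2 ^ 2 = (n : ℤ) ∧ p.1 % 2 = 1 ∧ p.2 % 2 = 0}.ncard : ℤ) =
      Sdiv chiM8 n 1 - Sdiv chiM8 n 2 + ∑ d ∈ n.divisors, chiM4 (n / d) * chi8 d := by
  rw [ncard_sq_add_two_mul_sq_odd_even, sum_chiM4_mul_chi8]
  rcases Nat.even_or_odd' n with ⟨k, rfl | rfl⟩
  · have hchi : chiM4 (2 * k) = 0 := by
      unfold chiM4
      split_ifs <;> omega
    rw [if_neg (by omega), hchi, Sdiv_chiM8_two_mul]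
    simp
  · rw [Sdiv_of_not_dvd chiM8 (k := 2) (by omega)]
    by_cases hmod : (2 * k + 1) % 4 = 1
    · have hchi : chiM4 (2 * k + 1) = 1 := if_pos hmod
      rw [if_pos (by exact_mod_cast hmod), ncard_elementsOfNorm_neg_two hn.ne', hchi]
      ring
    · have hchi : chiM4 (2 * k + 1) = -1 := by
        unfold chiM4
        split_ifs <;> omega
      rw [if_neg (by exact_mod_cast hmod), hchi]
      simp
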